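/- Define the polynomials t_n(y) = Σ_{i≥1} c(n,i) y^i in ℤ[y]. Then t_1(y) = 2y + 6y², t_2(y) = 2y + 44y² + 12y³ + 6y⁴, and for all n ≥ 3, t_n(y) = (4 + 3y + y²)·t_{n-1}(y) - (3 - 7y + 3y² + y³)·t_{n-2}(y). -/

import Mathlib

open SimpleGraph Polynomial

/-- A 2-colored partition of a simple graph `G`: a partition of the vertex set into
nonempty parts, each inducing a connected subgraph, together with an assignment of one
of two colors to each part such that distinct parts joined by an edge get different colors. -/
structure TwoColoredPartition {V : Type*} (G : SimpleGraph V) where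
  parts : Set (Set V)
  nonempty : ∀ p ∈ parts, p.Nonempty
  covers : ∀ v : V, ∃ p, p ∈ parts ∧ v ∈ p
  disj : ∀ p ∈ parts, ∀ q ∈ parts, p ≠ q → Disjoint p q
  conn : ∀ p ∈ parts, (G.induce p).Connected
  color : parts → Fin 2
  proper : ∀ p q : parts, p ≠ q →
    (∃ v ∈ (p : Set V), ∃ w ∈ (q : Set V), G.Adj v w) → color p ≠ color q

/-- The size of a 2-colored partition: its number of parts. -/
noncomputable def TwoColoredPartition.size {V : Type*} {G : SimpleGraph V}
    (T : TwoColoredPartition G) : ℕ :=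
  T.parts.ncard

/-- `c n i` is the number of 2-colored partitions of `K₃ × Pₙ` of size `i`. -/
noncomputable def c (n i : ℕ) : ℕ :=
  Nat.card {T : TwoColoredPartition ((⊤ : SimpleGraph (Fin 3)) □ pathGraph n) // T.size = i}

/-- `tpoly n = ∑_{i ≥ 1} c(n,i) yⁱ ∈ ℤ[y]`. -/
noncomputable def tpoly (n : ℕ) : Polynomial ℤ :=
  ∑ᶠ (i : ℕ) (_ : 1 ≤ i), Polynomial.monomial i (c n i : ℤ)

section Helpers

/-- The monochromatic subgraph of `G` under the coloring `f`. -/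
def monoGraph {V : Type*} (G : SimpleGraph V) (f : V → Fin 2) : SimpleGraph V where
  Adj v w := G.Adj v w ∧ f v = f w
  symm := ⟨fun _ _ h => ⟨h.1.symm, h.2.symm⟩⟩
  loopless := ⟨fun _ h => h.1.ne rfl⟩

/-- The monochromatic components, as sets. -/
def monoParts {V : Type*} (G : SimpleGraph V) (f : V → Fin 2) : Set (Set V) :=
  Set.range fun v => {w | (monoGraph G f).Reachable v w}

namespace TwoColoredPartition

variable {V : Type*} {G : SimpleGraph V}

/-- The vertex coloring induced by a 2-colored partition. -/
noncomputable def vcol (T : TwoColoredPartition G) (v : V) : Fin 2 :=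
  T.color ⟨(T.covers v).choose, (T.covers v).choose_spec.1⟩

lemma part_unique (T : TwoColoredPartition G) {p q : Set V} (hp : p ∈ T.parts)
    (hq : q ∈ T.parts) {v : V} (hvp : v ∈ p) (hvq : v ∈ q) : p = q := by
  by_contra h
  exact Set.disjoint_left.1 (T.disj p hp q hq h) hvp hvq

lemma vcol_eq (T : TwoColoredPartition G) {p : Set V} (hp : p ∈ T.parts) {v : V}
    (hv : v ∈ p) : T.vcol v = T.color ⟨p, hp⟩ := by
  unfold vcol
  congr 2
  exact T.part_unique (T.covers v).choose_spec.1 hp (T.covers v).choose_spec.2 hv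

lemma part_eq (T : TwoColoredPartition G) {p : Set V} (hp : p ∈ T.parts) {v : V}
    (hv : v ∈ p) : p = {w | (monoGraph G T.vcol).Reachable v w} := by
  ext w
  constructor
  · intro hw
    have h := (T.conn p hp).preconnected ⟨v, hv⟩ ⟨w, hw⟩
    let φ : G.induce p →g monoGraph G T.vcol :=
      ⟨fun x => x.1, fun {a b} hab => ⟨hab, by
        rw [T.vcol_eq hp a.2, T.vcol_eq hp b.2]⟩⟩
    exact h.map φ
  · rintro ⟨W⟩
    induction W with
    | nil => exact hv
    | cons hadj _ ih =>
      apply ih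
      rename_i a b c' _
      obtain ⟨q, hq, hbq⟩ := T.covers b
      by_cases hpq : p = q
      · exact hpq ▸ hbq
      · exfalso
        refine T.proper ⟨p, hp⟩ ⟨q, hq⟩ (fun h => hpq (congrArg Subtype.val h))
          ⟨_, hv, _, hbq, hadj.1⟩ ?_
        rw [← T.vcol_eq hp hv, ← T.vcol_eq hq hbq]
        exact hadj.2

lemma parts_eq (T : TwoColoredPartition G) : T.parts = monoParts G T.vcol := by
  ext p
  constructor
  · intro hp
    obtain ⟨v, hv⟩ := T.nonempty p hp
    exact ⟨v, (T.part_eq hp hv).symm⟩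
  · rintro ⟨v, rfl⟩
    obtain ⟨q, hq, hv⟩ := T.covers v
    have := T.part_eq hq hv
    simp only
    rw [← this]
    exact hq

lemma vcol_injective : Function.Injective (vcol (G := G)) := by
  intro T T' h
  have hp : T.parts = T'.parts := by rw [T.parts_eq, T'.parts_eq, h]
  have hc : ∀ p (h1 : p ∈ T.parts) (h2 : p ∈ T'.parts), T.color ⟨p, h1⟩ = T'.color ⟨p, h2⟩ := by
    intro p h1 h2
    obtain ⟨v, hv⟩ := T.nonempty p h1
    rw [← T.vcol_eq h1 hv, ← T'.vcol_eq h2 hv, h]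
  obtain ⟨P, _, _, _, _, c1, _⟩ := T
  obtain ⟨P', _, _, _, _, c2, _⟩ := T'
  dsimp only at hp hc
  subst hp
  have : c1 = c2 := by
    funext p
    exact hc p.1 p.2 p.2
  subst this
  rfl

lemma mono_const {f : V → Fin 2} {v w : V} (h : (monoGraph G f).Reachable v w) : f v = f w := by
  obtain ⟨W⟩ := h
  induction W with
  | nil => rfl
  | cons hadj _ ih => exact hadj.2.trans ih

/-- The 2-colored partition into monochromatic components. -/
noncomputable def ofCol (G : SimpleGraph V) (f : V → Fin 2) : TwoColoredPartition G where
  parts := monoParts G f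
  nonempty := by
    rintro _ ⟨v, rfl⟩
    exact ⟨v, SimpleGraph.Reachable.refl v⟩
  covers := fun v => ⟨_, ⟨v, rfl⟩, SimpleGraph.Reachable.refl v⟩
  disj := by
    rintro _ ⟨v, rfl⟩ _ ⟨w, rfl⟩ h
    rw [Set.disjoint_left]
    intro x hx hx'
    apply h
    have hvw : (monoGraph G f).Reachable v w := hx.trans hx'.symm
    ext y
    exact ⟨fun hy => hvw.symm.trans hy, fun hy => hvw.trans hy⟩
  conn := by
    rintro _ ⟨v, rfl⟩
    have h := ((monoGraph G f).connectedComponentMk v).connected_toSimpleGraph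
    have he : ((monoGraph G f).connectedComponentMk v).supp
        = {w | (monoGraph G f).Reachable v w} := by
      ext w
      simp only [ConnectedComponent.mem_supp_iff, ConnectedComponent.eq, Set.mem_ofPred_eq]
      exact ⟨fun h => h.symm, fun h => h.symm⟩
    have h' : ((monoGraph G f).induce {w | (monoGraph G f).Reachable v w}).Connected := by
      rw [← he]
      exact h
    refine h'.mono ?_
    intro a b hab
    have hab' : (monoGraph G f).Adj a.1 b.1 := hab
    exact hab'.1
  color := fun p => f p.2.choose
  proper := by
    rintro ⟨p, hp⟩ ⟨q, hq⟩ hne ⟨v, hv, w, hw, hadj⟩ hcol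
    apply hne
    have e1 := hp.choose_spec
    have e2 := hq.choose_spec
    simp only at hcol hv hw
    rw [← e1] at hv
    rw [← e2] at hw
    have hvw : (monoGraph G f).Adj v w :=
      ⟨hadj, by rw [← mono_const hv, ← mono_const hw]; exact hcol⟩
    have key : (monoGraph G f).Reachable hp.choose hq.choose :=
      (hv.trans hvw.reachable).trans hw.symm
    apply Subtype.ext
    simp only
    rw [← e1, ← e2]
    ext y
    exact ⟨fun hy => key.symm.trans hy, fun hy => key.trans hy⟩

lemma vcol_ofCol (f : V → Fin 2) : (ofCol G f).vcol = f := by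
  funext v
  have hp : {w | (monoGraph G f).Reachable v w} ∈ (ofCol G f).parts := ⟨v, rfl⟩
  rw [vcol_eq _ hp (v := v) (SimpleGraph.Reachable.refl v)]
  have h : {w | (monoGraph G f).Reachable hp.choose w} = _ := hp.choose_spec
  have hv : v ∈ {w | (monoGraph G f).Reachable hp.choose w} := by
    rw [h]; exact SimpleGraph.Reachable.refl v
  exact mono_const hv

/-- 2-colored partitions are the same as vertex colorings. -/
noncomputable def equivCol (G : SimpleGraph V) : TwoColoredPartition G ≃ (V → Fin 2) :=
  Equiv.ofBijective vcol ⟨vcol_injective, fun f => ⟨ofCol G f, vcol_ofCol f⟩⟩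

end TwoColoredPartition

/-- The graph `K₃ × Pₙ`. -/
abbrev KP (n : ℕ) : SimpleGraph (Fin 3 × Fin n) := (⊤ : SimpleGraph (Fin 3)) □ pathGraph n

/-- Color `a` occurs in both consecutive columns at a common position. -/
def Link (g : ℕ → Fin 3 → Fin 2) (a : Fin 2) (j : ℕ) : Prop :=
  ∃ i, g j i = a ∧ g (j + 1) i = a

open Classical in
/-- First column of the component passing through column `j` with color `a`. -/
noncomputable def rootCol (g : ℕ → Fin 3 → Fin 2) (a : Fin 2) : ℕ → ℕ
  | 0 => 0
  | j + 1 => if Link g a j then rootCol g a j else j + 1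

/-- A component of color `a` begins in column `j`. -/
def Start (g : ℕ → Fin 3 → Fin 2) (a : Fin 2) : ℕ → Prop
  | 0 => ∃ i, g 0 i = a
  | j + 1 => (∃ i, g (j + 1) i = a) ∧ ¬ ∃ i, g j i = a ∧ g (j + 1) i = a

lemma start_root {g : ℕ → Fin 3 → Fin 2} {a : Fin 2} :
    ∀ {j : ℕ}, Start g a j → rootCol g a j = j
  | 0, _ => rfl
  | j + 1, h => by
    have : ¬ Link g a j := h.2
    simp [rootCol, this]

lemma start_present {g : ℕ → Fin 3 → Fin 2} {a : Fin 2} :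
    ∀ {j : ℕ}, Start g a j → ∃ i, g j i = a
  | 0, h => h
  | _ + 1, h => h.1

lemma root_le (g : ℕ → Fin 3 → Fin 2) (a : Fin 2) : ∀ j, rootCol g a j ≤ j
  | 0 => le_rfl
  | j + 1 => by
    have := root_le g a j
    unfold rootCol
    split_ifs <;> omega

lemma root_start {g : ℕ → Fin 3 → Fin 2} {a : Fin 2} :
    ∀ {j : ℕ}, (∃ i, g j i = a) → Start g a (rootCol g a j)
  | 0, h => h
  | j + 1, h => by
    by_cases hl : Link g a j
    · simp only [rootCol, hl, if_true]
      obtain ⟨i, hi, _⟩ := hl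
      exact root_start ⟨i, hi⟩
    · simp only [rootCol, hl, if_false]
      exact ⟨h, hl⟩

/-- Columns of a coloring, extended by zero. -/
def ext0 {n : ℕ} (f : Fin 3 × Fin n → Fin 2) (j : ℕ) (i : Fin 3) : Fin 2 :=
  if h : j < n then f (i, ⟨j, h⟩) else 0

lemma ext0_fin {n : ℕ} (f : Fin 3 × Fin n → Fin 2) (j : Fin n) (i : Fin 3) :
    ext0 f j i = f (i, j) := by
  simp [ext0]

lemma reach_col {n : ℕ} (f : Fin 3 × Fin n → Fin 2) (i i' : Fin 3) (j : Fin n)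
    (h : f (i, j) = f (i', j)) : (monoGraph (KP n) f).Reachable (i, j) (i', j) := by
  by_cases hi : i = i'
  · rw [hi]
  · apply SimpleGraph.Adj.reachable
    refine ⟨?_, h⟩
    simp [SimpleGraph.boxProd_adj, hi]

lemma reach_root {n : ℕ} (f : Fin 3 × Fin n → Fin 2) (a : Fin 2) :
    ∀ (j : ℕ) (hj : j < n) (i : Fin 3) (_ : f (i, ⟨j, hj⟩) = a) (i' : Fin 3)
      (hr : rootCol (ext0 f) a j < n) (_ : f (i', ⟨rootCol (ext0 f) a j, hr⟩) = a),
      (monoGraph (KP n) f).Reachable (i, ⟨j, hj⟩) (i', ⟨rootCol (ext0 f) a j, hr⟩)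
  | 0, hj, i, hi, i', hr, hi' => reach_col f i i' ⟨0, hj⟩ (hi.trans hi'.symm)
  | j + 1, hj, i, hi, i', hr, hi' => by
    by_cases hl : Link (ext0 f) a j
    · have e : rootCol (ext0 f) a (j + 1) = rootCol (ext0 f) a j := by simp [rootCol, hl]
      obtain ⟨k, hk, hk'⟩ := hl
      have hjn : j < n := by omega
      have hk : f (k, ⟨j, hjn⟩) = a := by simpa [ext0, hjn] using hk
      have hk' : f (k, ⟨j + 1, hj⟩) = a := by simpa [ext0, hj] using hk'
      have h1 := reach_col f i k ⟨j + 1, hj⟩ (hi.trans hk'.symm)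
      have h2 : (monoGraph (KP n) f).Reachable (k, ⟨j + 1, hj⟩) (k, ⟨j, hjn⟩) := by
        apply SimpleGraph.Adj.reachable
        refine ⟨?_, hk'.trans hk.symm⟩
        simp [SimpleGraph.boxProd_adj, SimpleGraph.pathGraph_adj]
      simp only [e] at hi' ⊢
      exact (h1.trans h2).trans (reach_root f a j hjn k hk i' _ hi')
    · have e : rootCol (ext0 f) a (j + 1) = j + 1 := by simp [rootCol, hl]
      simp only [e] at hi' ⊢
      exact reach_col f i i' _ (hi.trans hi'.symm)

/-- The canonical label of the component of a vertex. -/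
noncomputable def label {n : ℕ} (f : Fin 3 × Fin n → Fin 2) (v : Fin 3 × Fin n) : ℕ × Fin 2 :=
  (rootCol (ext0 f) (f v) v.2, f v)

lemma label_adj_up {n : ℕ} (f : Fin 3 × Fin n → Fin 2) (i : Fin 3) (j j' : Fin n)
    (h : (j : ℕ) + 1 = j') (hc : f (i, j) = f (i, j')) : label f (i, j) = label f (i, j') := by
  have hl : Link (ext0 f) (f (i, j')) j := by
    refine ⟨i, ?_, ?_⟩
    · rw [ext0_fin, hc]
    · rw [h, ext0_fin]
  simp only [label, hc, ← h]
  simp [rootCol, hl]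

lemma label_adj {n : ℕ} (f : Fin 3 × Fin n → Fin 2) (v w : Fin 3 × Fin n)
    (h : (monoGraph (KP n) f).Adj v w) : label f v = label f w := by
  obtain ⟨i, j⟩ := v
  obtain ⟨i', j'⟩ := w
  obtain ⟨h1, h2⟩ := h
  rw [SimpleGraph.boxProd_adj] at h1
  rcases h1 with ⟨_, h1⟩ | ⟨h1, h3⟩
  · simp only at h1
    subst h1
    simp [label, h2]
  · simp only at h1 h3
    subst h3
    rw [SimpleGraph.pathGraph_adj] at h1
    rcases h1 with h1 | h1
    · exact label_adj_up f i j j' h1 h2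
    · exact (label_adj_up f i j' j h1 h2.symm).symm

lemma reachable_iff_label {n : ℕ} (f : Fin 3 × Fin n → Fin 2) (v w : Fin 3 × Fin n) :
    (monoGraph (KP n) f).Reachable v w ↔ label f v = label f w := by
  constructor
  · rintro ⟨W⟩
    induction W with
    | nil => rfl
    | cons hadj _ ih => exact (label_adj f _ _ hadj).trans ih
  · intro h
    obtain ⟨i, j⟩ := v
    obtain ⟨i', j'⟩ := w
    simp only [label, Prod.mk.injEq] at h
    obtain ⟨h1, h2⟩ := h
    have hlt : rootCol (ext0 f) (f (i, j)) j < n := lt_of_le_of_lt (root_le _ _ _) j.2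
    have hs : Start (ext0 f) (f (i, j)) (rootCol (ext0 f) (f (i, j)) j) :=
      root_start ⟨i, ext0_fin f j i⟩
    obtain ⟨k, hk⟩ := start_present hs
    have hk : f (k, ⟨_, hlt⟩) = f (i, j) := by simpa [ext0, hlt] using hk
    have r1 := reach_root f (f (i, j)) j j.2 i rfl k hlt hk
    rw [← h2] at h1
    have hlt' : rootCol (ext0 f) (f (i, j)) j' < n := h1 ▸ hlt
    have r2 := reach_root f (f (i, j)) j' j'.2 i' h2.symm k hlt' (by simp only [← h1]; exact hk)
    simp only [← h1] at r2
    exact r1.trans r2.symm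

lemma range_label {n : ℕ} (f : Fin 3 × Fin n → Fin 2) :
    Set.range (label f) = {p | p.1 < n ∧ Start (ext0 f) p.2 p.1} := by
  ext ⟨j, a⟩
  constructor
  · rintro ⟨⟨i, k⟩, h⟩
    simp only [label, Prod.mk.injEq] at h
    obtain ⟨rfl, rfl⟩ := h
    exact ⟨lt_of_le_of_lt (root_le _ _ _) k.2, root_start ⟨i, ext0_fin f k i⟩⟩
  · rintro ⟨h1, h2⟩
    simp only at h1 h2
    obtain ⟨i, hi⟩ := start_present h2
    have hi : f (i, ⟨j, h1⟩) = a := by simpa [ext0, h1] using hi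
    refine ⟨(i, ⟨j, h1⟩), ?_⟩
    simp [label, hi, start_root h2]

lemma ncard_monoParts {n : ℕ} (f : Fin 3 × Fin n → Fin 2) :
    (monoParts (KP n) f).ncard = {p : ℕ × Fin 2 | p.1 < n ∧ Start (ext0 f) p.2 p.1}.ncard := by
  rw [← range_label]
  have : monoParts (KP n) f = (fun p => label f ⁻¹' {p}) '' Set.range (label f) := by
    rw [← Set.range_comp]
    unfold monoParts
    congr 1
    funext v
    ext w
    simp only [Set.mem_ofPred_eq, reachable_iff_label, Function.comp, Set.mem_preimage,
      Set.mem_singleton_iff]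
    exact eq_comm
  rw [this]
  apply Set.InjOn.ncard_image
  rintro _ ⟨v, rfl⟩ q _ h
  have : v ∈ label f ⁻¹' {label f v} := rfl
  simp only at h
  rw [h] at this
  exact this

/-- A column. -/
abbrev Col := Fin 3 → Fin 2

/-- Number of colors present in a column. -/
def kk (u : Col) : ℕ := (Finset.univ.filter fun a : Fin 2 => ∃ i, u i = a).card

/-- Number of new components in column `u` following `t`. -/
def dd (t u : Col) : ℕ :=
  (Finset.univ.filter fun a : Fin 2 => (∃ i, u i = a) ∧ ¬ ∃ i, t i = a ∧ u i = a).card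

open Classical in
lemma ncard_starts (g : ℕ → Col) (m : ℕ) :
    {p : ℕ × Fin 2 | p.1 < m + 1 ∧ Start g p.2 p.1}.ncard
      = kk (g 0) + ∑ j ∈ Finset.range m, dd (g j) (g (j + 1)) := by
  have : {p : ℕ × Fin 2 | p.1 < m + 1 ∧ Start g p.2 p.1}
      = ((Finset.range (m + 1)).sigma fun j => Finset.univ.filter fun a => Start g a j).map
        (Equiv.sigmaEquivProd ℕ (Fin 2)).toEmbedding := by
    ext ⟨j, a⟩
    simp
  rw [this, Set.ncard_coe_finset, Finset.card_map, Finset.card_sigma, Finset.sum_range_succ',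
    add_comm]
  congr 1
  · unfold kk
    congr 1
    ext a
    refine Finset.mem_filter.trans (Iff.trans ?_ Finset.mem_filter.symm)
    exact Iff.rfl
  · apply Finset.sum_congr rfl
    intro j _
    unfold dd
    congr 1
    ext a
    refine Finset.mem_filter.trans (Iff.trans ?_ Finset.mem_filter.symm)
    exact Iff.rfl

/-- The weight of a sequence of columns. -/
def wt {m : ℕ} (s : Fin (m + 1) → Col) : ℕ :=
  kk (s 0) + ∑ j : Fin m, dd (s j.castSucc) (s j.succ)

lemma size_eq (m : ℕ) (T : TwoColoredPartition (KP (m + 1))) :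
    T.size = wt (fun j i => T.vcol (i, j)) := by
  unfold TwoColoredPartition.size
  rw [T.parts_eq, ncard_monoParts, ncard_starts, wt, Finset.sum_range]
  congr 1
  apply Finset.sum_congr rfl
  rintro ⟨j, hj⟩ _
  congr 1
  · funext i
    simp [ext0, Nat.lt_succ_of_lt hj]
  · funext i
    simp [ext0, hj]

/-- Partitions as sequences of columns. -/
noncomputable def partEquiv (n : ℕ) : TwoColoredPartition (KP n) ≃ (Fin n → Col) :=
  (TwoColoredPartition.equivCol (KP n)).trans
    (((Equiv.prodComm (Fin n) (Fin 3)).arrowCongr (Equiv.refl (Fin 2))).symm.trans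
      (Equiv.curry (Fin n) (Fin 3) (Fin 2)))

lemma c_eq (m i : ℕ) :
    c (m + 1) i = (Finset.univ.filter fun s : Fin (m + 1) → Col => wt s = i).card := by
  unfold c
  rw [← Fintype.card_subtype, ← Nat.card_eq_fintype_card]
  apply Nat.card_congr
  refine (partEquiv (m + 1)).subtypeEquiv ?_
  intro T
  rw [size_eq]
  rfl

lemma kk_pos : ∀ u : Col, 1 ≤ kk u := by decide

lemma tpoly_eq (m : ℕ) :
    tpoly (m + 1) = ∑ s : Fin (m + 1) → Col, (X : ℤ[X]) ^ wt s := by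
  have h1 := Finset.sum_comp (s := (Finset.univ : Finset (Fin (m + 1) → Col)))
    (fun i => (X : ℤ[X]) ^ i) wt
  rw [h1]
  unfold tpoly
  rw [finsum_eq_sum_of_support_subset (s := Finset.univ.image (wt (m := m)))]
  · apply Finset.sum_congr rfl
    intro i hi
    obtain ⟨s, _, rfl⟩ := Finset.mem_image.1 hi
    have : 1 ≤ wt s := le_trans (kk_pos (s 0)) (Nat.le_add_right _ _)
    rw [finsum_eq_if, if_pos this, c_eq, ← Polynomial.C_mul_X_pow_eq_monomial]
    simp
  · intro i hi
    by_contra hn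
    apply hi
    have : c (m + 1) i = 0 := by
      rw [c_eq, Finset.card_eq_zero, Finset.filter_eq_empty_iff]
      intro s _ hs
      exact hn (by simpa using ⟨s, hs⟩)
    simp [this]

/-- Weighted sum of continuations after column `t`. -/
noncomputable def FF : ℕ → Col → ℤ[X]
  | 0, _ => 1
  | n + 1, t => ∑ u : Col, X ^ dd t u * FF n u

lemma FF_eq : ∀ (m : ℕ) (t : Col), FF m t = ∑ s : Fin m → Col,
    (X : ℤ[X]) ^ (∑ j : Fin m, dd ((Fin.cons t s : Fin (m + 1) → Col) j.castSucc) (s j))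
  | 0, t => by simp [FF]
  | m + 1, t => by
    rw [FF, ← (Fin.consEquiv fun _ : Fin (m + 1) => Col).sum_comp, Fintype.sum_prod_type]
    apply Finset.sum_congr rfl
    intro u _
    rw [FF_eq m u, Finset.mul_sum]
    apply Finset.sum_congr rfl
    intro s _
    rw [← pow_add, Fin.sum_univ_succ]
    rfl

lemma tpoly_FF (m : ℕ) : tpoly (m + 1) = ∑ t : Col, X ^ kk t * FF m t := by
  rw [tpoly_eq, ← (Fin.consEquiv fun _ : Fin (m + 1) => Col).sum_comp, Fintype.sum_prod_type]
  apply Finset.sum_congr rfl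
  intro u _
  rw [FF_eq m u, Finset.mul_sum]
  apply Finset.sum_congr rfl
  intro s _
  rw [← pow_add]
  rfl

lemma sum_col (g : Col → ℤ[X]) : ∑ u : Col, g u =
    g ![0, 0, 0] + g ![1, 1, 1] + g ![0, 0, 1] + g ![0, 1, 0] + g ![1, 0, 0]
      + g ![1, 1, 0] + g ![1, 0, 1] + g ![0, 1, 1] := by
  have : (Finset.univ : Finset Col) = {![0, 0, 0], ![1, 1, 1], ![0, 0, 1], ![0, 1, 0],
    ![1, 0, 0], ![1, 1, 0], ![1, 0, 1], ![0, 1, 1]} := by decide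
  rw [this]
  repeat rw [Finset.sum_insert (by decide)]
  rw [Finset.sum_singleton]
  ring

/-- Pair of values of `FF` on monochromatic and mixed columns. -/
noncomputable def AB : ℕ → ℤ[X] × ℤ[X]
  | 0 => (1, 1)
  | n + 1 => ((1 + X) * (AB n).1 + 6 * X * (AB n).2,
      2 * (AB n).1 + (3 + 2 * X + X ^ 2) * (AB n).2)

lemma FF_AB : ∀ (m : ℕ) (t : Col), FF m t = if kk t = 1 then (AB m).1 else (AB m).2
  | 0, t => by simp [FF, AB]
  | m + 1, t => by
    have k0 : kk ![0, 0, 0] = 1 := by decide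
    have k1 : kk ![1, 1, 1] = 1 := by decide
    have k2 : kk ![0, 0, 1] = 2 := by decide
    have k3 : kk ![0, 1, 0] = 2 := by decide
    have k4 : kk ![1, 0, 0] = 2 := by decide
    have k5 : kk ![1, 1, 0] = 2 := by decide
    have k6 : kk ![1, 0, 1] = 2 := by decide
    have k7 : kk ![0, 1, 1] = 2 := by decide
    rw [FF, sum_col]
    simp only [FF_AB m, k0, k1, k2, k3, k4, k5, k6, k7]
    have hmono : ∀ t : Col, kk t = 1 → dd t ![0, 0, 0] + dd t ![1, 1, 1] = 1 ∧
        dd t ![0, 0, 1] = 1 ∧ dd t ![0, 1, 0] = 1 ∧ dd t ![1, 0, 0] = 1 ∧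
        dd t ![1, 1, 0] = 1 ∧ dd t ![1, 0, 1] = 1 ∧ dd t ![0, 1, 1] = 1 := by decide
    have hmix : ∀ t : Col, kk t ≠ 1 → dd t ![0, 0, 0] = 0 ∧ dd t ![1, 1, 1] = 0 ∧
        List.Perm [dd t ![0, 0, 1], dd t ![0, 1, 0], dd t ![1, 0, 0],
          dd t ![1, 1, 0], dd t ![1, 0, 1], dd t ![0, 1, 1]] [0, 0, 0, 1, 1, 2] := by decide
    by_cases ht : kk t = 1
    · obtain ⟨h0, h2, h3, h4, h5, h6, h7⟩ := hmono t ht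
      have h01 : (dd t ![0, 0, 0] = 0 ∧ dd t ![1, 1, 1] = 1) ∨
          (dd t ![0, 0, 0] = 1 ∧ dd t ![1, 1, 1] = 0) := by omega
      rw [h2, h3, h4, h5, h6, h7, if_pos ht]
      rcases h01 with ⟨e0, e1⟩ | ⟨e0, e1⟩ <;> rw [e0, e1] <;> simp [AB] <;> ring
    · obtain ⟨h0, h1, hp⟩ := hmix t ht
      have hs := (hp.map fun e => (X : ℤ[X]) ^ e).sum_eq
      simp only [List.map_cons, List.map_nil, List.sum_cons, List.sum_nil] at hs
      rw [h0, h1, if_neg ht]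
      simp only [AB, if_true, OfNat.ofNat_ne_one, if_false]
      linear_combination (AB m).2 * hs

lemma tpoly_AB (m : ℕ) : tpoly (m + 1) = 2 * X * (AB m).1 + 6 * X ^ 2 * (AB m).2 := by
  have k0 : kk ![0, 0, 0] = 1 := by decide
  have k1 : kk ![1, 1, 1] = 1 := by decide
  have k2 : kk ![0, 0, 1] = 2 := by decide
  have k3 : kk ![0, 1, 0] = 2 := by decide
  have k4 : kk ![1, 0, 0] = 2 := by decide
  have k5 : kk ![1, 1, 0] = 2 := by decide
  have k6 : kk ![1, 0, 1] = 2 := by decide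
  have k7 : kk ![0, 1, 1] = 2 := by decide
  rw [tpoly_FF, sum_col]
  simp only [FF_AB m, k0, k1, k2, k3, k4, k5, k6, k7]
  norm_num
  ring

end Helpers

/-- `t₁(y) = 2y + 6y²`, `t₂(y) = 2y + 44y² + 12y³ + 6y⁴`, and for `n ≥ 3`,
`tₙ(y) = (4 + 3y + y²)·t_{n-1}(y) - (3 - 7y + 3y² + y³)·t_{n-2}(y)`. -/
theorem tpoly_recurrence :
    tpoly 1 = 2 * Polynomial.X + 6 * Polynomial.X ^ 2 ∧
    tpoly 2 = 2 * Polynomial.X + 44 * Polynomial.X ^ 2 + 12 * Polynomial.X ^ 3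
        + 6 * Polynomial.X ^ 4 ∧
    ∀ n : ℕ, 3 ≤ n →
      tpoly n = (4 + 3 * Polynomial.X + Polynomial.X ^ 2) * tpoly (n - 1)
        - (3 - 7 * Polynomial.X + 3 * Polynomial.X ^ 2 + Polynomial.X ^ 3) * tpoly (n - 2) := by
  refine ⟨?_, ?_, ?_⟩
  · rw [tpoly_AB 0]
    simp [AB]
  · rw [tpoly_AB 1]
    simp only [AB]
    ring
  · intro n hn
    obtain ⟨m, rfl⟩ := Nat.exists_eq_add_of_le hn
    have e0 : 3 + m = (m + 2) + 1 := by omega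
    have e1 : 3 + m - 1 = (m + 1) + 1 := by omega
    have e2 : 3 + m - 2 = m + 1 := by omega
    rw [e1, e2, e0, tpoly_AB, tpoly_AB, tpoly_AB]
    simp only [AB]
    ring
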